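/- Let Φ̊ be a reduced irreducible root system of rank n ≥ 2 in V with a fixed base Δ = {α₁, …, α_n}, let k ≥ 1, and let Φ^re = {(α, r) : α ∈ Φ̊, r ∈ ℤᵏ} be the set of real roots of the untwisted toroidal affine reflection system. Then Ψ ⊆ Φ^re is a maximal closed subroot system with Gr(Ψ) = Φ̊ if and only if there exist a prime q, integers b₁, …, b_n with 0 ≤ bᵢ ≤ q − 1, and a k×k integer matrix U in Hermite normal form with det U = q, such that Ψ = {(α, b_α e_ℓ + m) : α ∈ Φ̊, m ∈ L_U}, where L_U ⊆ ℤᵏ is the subgroup generated by the rows u₁, …, u_k of U, ℓ is the unique index with u_ℓ = q·e_ℓ (e_ℓ the ℓ-th standard basis vector), and b_α = Σᵢ cᵢbᵢ whenever α = Σᵢ cᵢαᵢ with cᵢ ∈ ℤ. Moreover, the triple (q, (b₁, …, b_n), U) with these properties is uniquely determined by Ψ, so such Ψ are in one-to-one correspondence with triples consisting of a prime q, a tuple (bᵢ) ∈ {0, …, q−1}ⁿ, and a k×k Hermite normal form matrix U of determinant q. -/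

import Mathlib

open scoped RealInnerProductSpace Pointwise

noncomputable section

namespace BdS

variable {V Y : Type*} [NormedAddCommGroup V] [InnerProductSpace ℝ V]
variable [AddCommGroup Y] [Module ℝ Y]

/-- `pairing β α = (β, α∨) = 2(β,α)/(α,α)`. -/
def pairing (β α : V) : ℝ := 2 * ⟪β, α⟫ / ⟪α, α⟫

/-- `reflRoot α v = s_α(v) = v − (v, α∨)α`. -/
def reflRoot (α v : V) : V := v - pairing v α • α

/-- A (finite) root system in `V`. -/
def IsRootSystem (Φ : Set V) : Prop :=
  Φ.Finite ∧ (0 : V) ∉ Φ ∧ Submodule.span ℝ Φ = ⊤ ∧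
    (∀ α ∈ Φ, ∀ β ∈ Φ, reflRoot α β ∈ Φ) ∧
    ∀ α ∈ Φ, ∀ β ∈ Φ, ∃ m : ℤ, pairing β α = (m : ℝ)

def IsReduced (Φ : Set V) : Prop :=
  ∀ α ∈ Φ, ∀ c : ℝ, c • α ∈ Φ → c • α = α ∨ c • α = -α

def IsIrreducible (Φ : Set V) : Prop :=
  ∀ Φ₁ Φ₂ : Set V, Φ = Φ₁ ∪ Φ₂ → (∀ x ∈ Φ₁, ∀ y ∈ Φ₂, ⟪x, y⟫ = 0) →
    Φ₁ = ∅ ∨ Φ₂ = ∅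

/-- divisible roots -/
def divSet (Φ : Set V) : Set V := {α ∈ Φ | (2:ℝ)⁻¹ • α ∈ Φ}
/-- non-divisible roots -/
def ndSet (Φ : Set V) : Set V := Φ \ divSet Φ
/-- short roots: non-divisible roots of non-maximal squared length -/
def shortSet (Φ : Set V) : Set V := {α ∈ ndSet Φ | ∃ β ∈ ndSet Φ, ⟪α, α⟫ < ⟪β, β⟫}
/-- long roots -/
def longSet (Φ : Set V) : Set V := ndSet Φ \ shortSet Φ

/-- An extension datum of type `(Φ, Y)`. -/
def IsExtensionDatum (Φ : Set V) (Λ : V → Set Y) : Prop :=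
  (∀ α ∈ Φ, ∀ β ∈ Φ, ∀ z ∈ Λ α, ∀ y ∈ Λ β, y - pairing β α • z ∈ Λ (reflRoot α β)) ∧
  (0 : Y) ∈ Λ 0 ∧
  (∀ α ∈ ndSet Φ, (0 : Y) ∈ Λ α) ∧
  (∀ α ∈ divSet Φ, (Λ α).Nonempty) ∧
  Submodule.span ℝ (⋃ α ∈ insert (0 : V) Φ, Λ α) = ⊤

/-- subroot system of a finite root system -/
def IsSubRS (Φ Δ : Set V) : Prop :=
  Δ.Nonempty ∧ Δ ⊆ Φ ∧ ∀ α ∈ Δ, ∀ β ∈ Δ, reflRoot α β ∈ Δ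

def IsClosedSubRS (Φ Δ : Set V) : Prop :=
  IsSubRS Φ Δ ∧ ∀ α ∈ Δ, ∀ β ∈ Δ, α + β ∈ Φ → α + β ∈ Δ

def IsMaxClosedSubRS (Φ Δ : Set V) : Prop :=
  IsClosedSubRS Φ Δ ∧ Δ ≠ Φ ∧
    ∀ Δ' : Set V, IsClosedSubRS Φ Δ' → Δ' ≠ Φ → Δ ⊆ Δ' → Δ' = Δ

/-- semi-closed subroot system, relative to given short/long/divisible parts -/
def IsSemiClosedSubRS (Φ Φs Φl Φd Δ : Set V) : Prop :=
  IsSubRS Φ Δ ∧ ¬ (∀ α ∈ Δ, ∀ β ∈ Δ, α + β ∈ Φ → α + β ∈ Δ) ∧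
    ∀ α ∈ Δ, ∀ β ∈ Δ, α + β ∈ Φ → α + β ∉ Δ →
      (α ∈ Φs ∧ β ∈ Φs ∧ α + β ∈ Φl ∪ Φd) ∨ (α ∈ Φl ∧ β ∈ Φl ∧ α + β ∈ Φd)

def IsMaxSemiClosedSubRS (Φ Φs Φl Φd Δ : Set V) : Prop :=
  IsSemiClosedSubRS Φ Φs Φl Φd Δ ∧
    ∀ Δ' : Set V, IsClosedSubRS Φ Δ' → Δ' ≠ Φ → ¬ Δ ⊂ Δ'

/-- the set of real roots attached to an extension datum -/
def PhiRe (Φ : Set V) (Λ : V → Set Y) : Set (V × Y) := {x | x.1 ∈ Φ ∧ x.2 ∈ Λ x.1}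

/-- affine reflection `s_{α ⊕ y}(β ⊕ z) = s_α(β) ⊕ (z − (β,α∨)y)` -/
def reflAff (a x : V × Y) : V × Y := (reflRoot a.1 x.1, x.2 - pairing x.1 a.1 • a.2)

/-- subroot system of a set of real roots `R` -/
def IsSubSys (R Ψ : Set (V × Y)) : Prop :=
  Ψ.Nonempty ∧ Ψ ⊆ R ∧ Ψ ≠ R ∧ ∀ a ∈ Ψ, ∀ x ∈ Ψ, reflAff a x ∈ Ψ

def IsClosedSubSys (R Ψ : Set (V × Y)) : Prop :=
  IsSubSys R Ψ ∧ ∀ x ∈ Ψ, ∀ y ∈ Ψ, x + y ∈ R → x + y ∈ Ψ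

def IsMaxClosedSubSys (R Ψ : Set (V × Y)) : Prop :=
  IsClosedSubSys R Ψ ∧ ∀ Ψ' : Set (V × Y), IsClosedSubSys R Ψ' → Ψ ⊆ Ψ' → Ψ' = Ψ

/-- gradient of a subroot system -/
def Gr (Ψ : Set (V × Y)) : Set V := {α | ∃ y : Y, (α, y) ∈ Ψ}

def Zset (Ψ : Set (V × Y)) (α : V) : Set Y := {y | (α, y) ∈ Ψ}

abbrev E (n : ℕ) := EuclideanSpace ℝ (Fin n)

def eps {n : ℕ} (i : Fin n) : E n := EuclideanSpace.single i 1

def shortBC (n : ℕ) : Set (E n) := {v | ∃ i : Fin n, v = eps i ∨ v = -eps i}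

def longBC (n : ℕ) : Set (E n) :=
  {v | ∃ i j : Fin n, i ≠ j ∧ ∃ c d : ℝ, (c = 1 ∨ c = -1) ∧ (d = 1 ∨ d = -1) ∧
    v = c • eps i + d • eps j}

def divBC (n : ℕ) : Set (E n) :=
  {v | ∃ i : Fin n, v = (2:ℝ) • eps i ∨ v = -((2:ℝ) • eps i)}

def BCn (n : ℕ) : Set (E n) := shortBC n ∪ longBC n ∪ divBC n
def Bn (n : ℕ) : Set (E n) := shortBC n ∪ longBC n
def Cn (n : ℕ) : Set (E n) := longBC n ∪ divBC n

/-- a square integer matrix in Hermite normal form. -/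
def IsHNF {k : ℕ} (A : Matrix (Fin k) (Fin k) ℤ) : Prop :=
  (∀ i j : Fin k, j < i → A i j = 0) ∧ (∀ j : Fin k, 0 < A j j) ∧
    ∀ i j : Fin k, i < j → 0 ≤ A i j ∧ A i j < A j j

/-- `Ψ` is the maximal closed subroot system of the untwisted toroidal affine
reflection system attached to the triple `(q, (bᵢ), U)`:
`Ψ = {α ⊕ (b_α e_ℓ + L_U) : α ∈ Φ̊}` where `L_U` is the subgroup generated by
the rows of `U` and `ℓ` is the unique index with `u_ℓ = q·e_ℓ`. -/
def ToroidalRep {V : Type*} [NormedAddCommGroup V] [InnerProductSpace ℝ V]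
    {n k : ℕ} (Φ : Set V) (b : Fin n → V) (q : ℕ) (bv : Fin n → ℤ)
    (U : Matrix (Fin k) (Fin k) ℤ) (Ψ : Set (V × (Fin k → ℝ))) : Prop :=
  q.Prime ∧ (∀ i, 0 ≤ bv i ∧ bv i ≤ (q : ℤ) - 1) ∧ IsHNF U ∧ U.det = (q : ℤ) ∧
  ∃ l : Fin k, (U l = fun t => if t = l then (q : ℤ) else 0) ∧
    (∀ l' : Fin k, (U l' = fun t => if t = l' then (q : ℤ) else 0) → l' = l) ∧
    Ψ = {x | x.1 ∈ Φ ∧ ∃ c : Fin n → ℤ, x.1 = ∑ i, (c i : ℝ) • b i ∧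
      ∃ m ∈ AddSubgroup.closure (Set.range fun i => U i),
        x.2 = fun t => (((if t = l then ∑ i, c i * bv i else 0) + m t : ℤ) : ℝ)}

section Aux

variable {W : Type*} [NormedAddCommGroup W] [InnerProductSpace ℝ W]

lemma inner_self_pos' {v : W} (hv : v ≠ 0) : 0 < (⟪v, v⟫ : ℝ) :=
  real_inner_self_pos.2 hv

lemma pairing_self {v : W} (hv : v ≠ 0) : pairing v v = 2 := by
  have := (inner_self_pos' hv).ne'
  unfold pairing
  field_simp

lemma rs_neg {Φ : Set W} (hΦ : IsRootSystem Φ) {α : W} (h : α ∈ Φ) : -α ∈ Φ := by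
  have h0 : α ≠ 0 := fun h0 => hΦ.2.1 (h0 ▸ h)
  have := hΦ.2.2.2.1 α h α h
  unfold reflRoot at this
  rw [pairing_self h0] at this
  convert this using 1
  module

lemma rs_sub {Φ : Set W} (hΦ : IsRootSystem Φ) (hred : IsReduced Φ) {α β : W}
    (hα : α ∈ Φ) (hβ : β ∈ Φ) (hne : α ≠ β) (hpos : 0 < (⟪α, β⟫ : ℝ)) : α - β ∈ Φ := by
  have hα0 : α ≠ 0 := fun h0 => hΦ.2.1 (h0 ▸ hα)
  have hβ0 : β ≠ 0 := fun h0 => hΦ.2.1 (h0 ▸ hβ)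
  have hA := inner_self_pos' hα0
  have hB := inner_self_pos' hβ0
  obtain ⟨m, hm⟩ := hΦ.2.2.2.2 β hβ α hα
  obtain ⟨m', hm'⟩ := hΦ.2.2.2.2 α hα β hβ
  have e1 : (m : ℝ) * ⟪β, β⟫ = 2 * ⟪α, β⟫ := by
    rw [← hm, pairing]; field_simp
  have e2 : (m' : ℝ) * ⟪α, α⟫ = 2 * ⟪α, β⟫ := by
    rw [← hm', pairing, real_inner_comm]; field_simp
  have hmpos : 0 < m := by
    by_contra h
    have : (m : ℝ) ≤ 0 := by exact_mod_cast not_lt.1 h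
    nlinarith
  have hmpos' : 0 < m' := by
    by_contra h
    have : (m' : ℝ) ≤ 0 := by exact_mod_cast not_lt.1 h
    nlinarith
  by_cases h1 : m = 1
  · have := hΦ.2.2.2.1 β hβ α hα
    rw [reflRoot, hm, h1] at this
    simpa using this
  by_cases h2 : m' = 1
  · have := hΦ.2.2.2.1 α hα β hβ
    rw [reflRoot, hm', h2] at this
    have := rs_neg hΦ this
    simpa using this
  exfalso
  have h3 : (2 : ℝ) ≤ m := by exact_mod_cast (by omega : 2 ≤ m)
  have h4 : (2 : ℝ) ≤ m' := by exact_mod_cast (by omega : 2 ≤ m')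
  have hBC : (⟪β, β⟫ : ℝ) ≤ ⟪α, β⟫ := by nlinarith
  have hAC : (⟪α, α⟫ : ℝ) ≤ ⟪α, β⟫ := by nlinarith
  have hz : (⟪α - β, α - β⟫ : ℝ) = ⟪α, α⟫ - 2 * ⟪α, β⟫ + ⟪β, β⟫ := by
    rw [real_inner_sub_sub_self]
  have hz' : (⟪α - β, α - β⟫ : ℝ) ≤ 0 := by linarith
  have := real_inner_self_nonpos.1 hz'
  exact hne (sub_eq_zero.1 this)

lemma rs_add {Φ : Set W} (hΦ : IsRootSystem Φ) (hred : IsReduced Φ) {α β : W}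
    (hα : α ∈ Φ) (hβ : β ∈ Φ) (hne : α ≠ -β) (hpos : (⟪α, β⟫ : ℝ) < 0) : α + β ∈ Φ := by
  have := rs_sub hΦ hred hα (rs_neg hΦ hβ) hne (by rw [inner_neg_right]; linarith)
  simpa using this

/-- every root is part of a triple of roots -/
lemma rs_triple {Φ : Set W} (hΦ : IsRootSystem Φ) (hred : IsReduced Φ) (hirr : IsIrreducible Φ)
    {n : ℕ} (hn : 2 ≤ n) (b : Fin n → W) (hbΦ : ∀ i, b i ∈ Φ) (hbli : LinearIndependent ℝ b)
    {α : W} (hα : α ∈ Φ) : ∃ β ∈ Φ, α + β ∈ Φ := by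
  by_contra hcon
  push Not at hcon
  have key : ∀ β ∈ Φ, β ≠ α → β ≠ -α → (⟪α, β⟫ : ℝ) = 0 := by
    intro β hβ h1 h2
    rcases lt_trichotomy (⟪α, β⟫ : ℝ) 0 with h | h | h
    · exact absurd (rs_add hΦ hred hα hβ (fun h => h2 (by rw [h, neg_neg])) h) (hcon β hβ)
    · exact h
    · have := rs_sub hΦ hred hα hβ (Ne.symm h1) h
      rw [sub_eq_add_neg] at this
      exact absurd this (hcon _ (rs_neg hΦ hβ))
  have := hirr {x | x ∈ Φ ∧ (x = α ∨ x = -α)} {x | x ∈ Φ ∧ ¬ (x = α ∨ x = -α)} (by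
    ext x; simp only [Set.mem_union, Set.mem_ofPred_eq]; tauto) (by
    rintro x ⟨_, hx⟩ y ⟨hy, hy'⟩
    push Not at hy'
    have := key y hy hy'.1 hy'.2
    rcases hx with rfl | rfl
    · exact this
    · rw [inner_neg_left, this, neg_zero])
  rcases this with h | h
  · have : α ∈ ({x | x ∈ Φ ∧ (x = α ∨ x = -α)} : Set W) := ⟨hα, Or.inl rfl⟩
    rw [h] at this; exact this
  · have hall : ∀ x ∈ Φ, x = α ∨ x = -α := by
      intro x hx
      by_contra hc
      have : x ∈ ({x | x ∈ Φ ∧ ¬ (x = α ∨ x = -α)} : Set W) := ⟨hx, hc⟩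
      rw [h] at this; exact this
    let i0 : Fin n := ⟨0, by omega⟩
    let i1 : Fin n := ⟨1, by omega⟩
    have hne : i0 ≠ i1 := by simp [i0, i1]
    have hp := (LinearIndependent.pair_iff.1 (hbli.comp ![i0, i1] (by
      intro a c hac
      fin_cases a <;> fin_cases c <;> simp_all) |> fun h => by
        have : b ∘ ![i0, i1] = ![b i0, b i1] := by ext j; fin_cases j <;> rfl
        rw [this] at h; exact h))
    rcases hall _ (hbΦ i0) with h0 | h0 <;> rcases hall _ (hbΦ i1) with h1 | h1
    · have := hp 1 (-1) (by rw [h0, h1]; module); simp at this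
    · have := hp 1 1 (by rw [h0, h1]; module); simp at this
    · have := hp 1 1 (by rw [h0, h1]; module); simp at this
    · have := hp 1 (-1) (by rw [h0, h1]; module); simp at this

lemma rs_const {Φ : Set W} (hΦ : IsRootSystem Φ) (hred : IsReduced Φ) (hirr : IsIrreducible Φ)
    {T : Type*} (D : W → T) (hneg : ∀ α ∈ Φ, D (-α) = D α)
    (hadd : ∀ α ∈ Φ, ∀ β ∈ Φ, α + β ∈ Φ → D α = D β) {α β : W} (hα : α ∈ Φ) (hβ : β ∈ Φ) :
    D β = D α := by
  by_contra hc
  rcases hirr {x | x ∈ Φ ∧ D x = D α} {x | x ∈ Φ ∧ ¬ D x = D α} (by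
    ext x; simp only [Set.mem_union, Set.mem_ofPred_eq]; tauto) (by
    rintro x ⟨hx, hx'⟩ y ⟨hy, hy'⟩
    have n1 : x ≠ y := by rintro rfl; exact hy' hx'
    have n2 : x ≠ -y := by rintro rfl; exact hy' (by rw [← hneg y hy, hx'])
    rcases lt_trichotomy (⟪x, y⟫ : ℝ) 0 with h | h | h
    · exact absurd ((hadd x hx y hy (rs_add hΦ hred hx hy n2 h)).symm.trans hx') hy'
    · exact h
    · have := rs_sub hΦ hred hx hy n1 h
      rw [sub_eq_add_neg] at this
      have := hadd x hx (-y) (rs_neg hΦ hy) this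
      rw [hneg y hy] at this
      exact absurd (this.symm.trans hx') hy') with h | h
  · have : α ∈ ({x | x ∈ Φ ∧ D x = D α} : Set W) := ⟨hα, rfl⟩
    rw [h] at this; exact this
  · have : β ∈ ({x | x ∈ Φ ∧ ¬ D x = D α} : Set W) := ⟨hβ, hc⟩
    rw [h] at this; exact this

/-- induction on heights -/
lemma rs_height {Φ : Set W} (hΦ : IsRootSystem Φ) (hred : IsReduced Φ)
    {n : ℕ} (b : Fin n → W) (hbΦ : ∀ i, b i ∈ Φ) (hbli : LinearIndependent ℝ b)
    {M : Type*} [AddCommGroup M] (Z : W → Set M)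
    (Zadd : ∀ α ∈ Φ, ∀ β ∈ Φ, α + β ∈ Φ → ∀ m ∈ Z α, ∀ m' ∈ Z β, m + m' ∈ Z (α + β))
    (z : Fin n → M) (hz : ∀ i, z i ∈ Z (b i)) (N : ℕ) :
    ∀ c : Fin n → ℤ, (∀ i, 0 ≤ c i) → ∑ i, c i = N → ∑ i, (c i : ℝ) • b i ∈ Φ →
      ∑ i, c i • z i ∈ Z (∑ i, (c i : ℝ) • b i) := by
  induction N with
  | zero =>
    intro c hc hs hmem
    exfalso
    have : ∀ i, c i = 0 := by
      intro i
      exact (Finset.sum_eq_zero_iff_of_nonneg (fun i _ => hc i)).1 (by simpa using hs) i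
        (Finset.mem_univ i)
    apply hΦ.2.1
    simpa [this] using hmem
  | succ N ih =>
    intro c hc hs hmem
    set α := ∑ i, (c i : ℝ) • b i with hαdef
    have hα0 : α ≠ 0 := fun h0 => hΦ.2.1 (h0 ▸ hmem)
    have hpos := inner_self_pos' hα0
    have hex : ∃ i, 0 < (c i : ℝ) * ⟪α, b i⟫ := by
      by_contra hcon
      push Not at hcon
      have : (⟪α, α⟫ : ℝ) = ∑ i, (c i : ℝ) * ⟪α, b i⟫ := by
        conv_lhs => rw [hαdef]
        rw [← hαdef]
        conv_lhs => arg 3; rw [hαdef]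
        rw [inner_sum]
        simp [inner_smul_right]
      have := Finset.sum_nonpos (fun i (_ : i ∈ Finset.univ) => hcon i)
      linarith
    obtain ⟨i, hi⟩ := hex
    have hci : (0 : ℝ) ≤ c i := by exact_mod_cast hc i
    have hci' : (0 : ℝ) < c i := lt_of_le_of_ne hci (by rintro h; rw [← h] at hi; simp at hi)
    have hci'' : 0 < c i := by exact_mod_cast hci'
    have hin : 0 < (⟪α, b i⟫ : ℝ) := by
      by_contra h; nlinarith
    have s1 : ∑ j, (c j - if j = i then 1 else 0) • z j = ∑ j, c j • z j - z i := by
      simp [sub_smul, Finset.sum_sub_distrib]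
    by_cases hαi : α = b i
    · have : ∀ j, (c j : ℝ) = if j = i then 1 else 0 := by
        have h0 : ∑ j, ((c j : ℝ) - if j = i then 1 else 0) • b j = 0 := by
          simp only [sub_smul, Finset.sum_sub_distrib]
          rw [← hαdef, hαi]; simp
        intro j
        have := Fintype.linearIndependent_iff.1 hbli _ h0 j
        linarith
      have hcj : ∀ j, c j = if j = i then 1 else 0 := by
        intro j; have := this j; split_ifs at this ⊢ <;> exact_mod_cast this
      rw [hαi]
      simp only [hcj]
      simpa using hz i
    · have hsub := rs_sub hΦ hred hmem (hbΦ i) hαi hin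
      have e : ∑ j, (((c j - if j = i then 1 else 0 : ℤ)) : ℝ) • b j = α - b i := by
        push_cast
        simp only [sub_smul, Finset.sum_sub_distrib]
        rw [← hαdef]; simp
      have := ih (fun j => c j - if j = i then 1 else 0) (by
        intro j; have := hc j; split_ifs with h
        · subst h; omega
        · omega) (by
        simp [Finset.sum_sub_distrib, hs]) (by rw [e]; exact hsub)
      rw [e, s1] at this
      have h2 := Zadd _ hsub _ (hbΦ i) (by rw [sub_add_cancel]; exact hmem) _ this _ (hz i)
      simpa using h2

end Aux
section Struct

variable {W : Type*} [NormedAddCommGroup W] [InnerProductSpace ℝ W]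

/-- structure of the families of translates -/
lemma struct_lemma {Φ : Set W} (hΦ : IsRootSystem Φ) (hred : IsReduced Φ) (hirr : IsIrreducible Φ)
    {n : ℕ} (hn : 2 ≤ n) (b : Fin n → W) (hbΦ : ∀ i, b i ∈ Φ) (hbli : LinearIndependent ℝ b)
    (hbase : ∀ α ∈ Φ, ∃ c : Fin n → ℤ,
      α = ∑ i, (c i : ℝ) • b i ∧ ((∀ i, 0 ≤ c i) ∨ (∀ i, c i ≤ 0)))
    {M : Type*} [AddCommGroup M] (Z : W → Set M)
    (Zne : ∀ α ∈ Φ, (Z α).Nonempty)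
    (Zneg : ∀ α ∈ Φ, ∀ m ∈ Z α, -m ∈ Z (-α))
    (Zadd : ∀ α ∈ Φ, ∀ β ∈ Φ, α + β ∈ Φ → ∀ m ∈ Z α, ∀ m' ∈ Z β, m + m' ∈ Z (α + β)) :
    ∃ (L : AddSubgroup M) (z : Fin n → M), ∀ c : Fin n → ℤ, ∑ i, (c i : ℝ) • b i ∈ Φ →
      ∀ m, m ∈ Z (∑ i, (c i : ℝ) • b i) ↔ m - ∑ i, c i • z i ∈ L := by
  choose z hz using fun i => Zne (b i) (hbΦ i)
  let D : W → Set M := fun α => {d | ∃ x ∈ Z α, ∃ y ∈ Z α, d = x - y}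
  have Dneg' : ∀ α, ∀ d ∈ D α, -d ∈ D α := by
    rintro α d ⟨x, hx, y, hy, rfl⟩
    exact ⟨y, hy, x, hx, by abel⟩
  have Dneg1 : ∀ α ∈ Φ, D α ⊆ D (-α) := by
    rintro α hα d ⟨x, hx, y, hy, rfl⟩
    exact ⟨-y, Zneg α hα y hy, -x, Zneg α hα x hx, by abel⟩
  have Dneg : ∀ α ∈ Φ, D (-α) = D α := by
    intro α hα
    apply Set.Subset.antisymm _ (Dneg1 α hα)
    have := Dneg1 _ (rs_neg hΦ hα)
    rwa [neg_neg] at this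
  have stab : ∀ α ∈ Φ, ∀ β ∈ Φ, α + β ∈ Φ → ∀ m ∈ Z α, ∀ d ∈ D β, m + d ∈ Z α := by
    rintro α hα β hβ hab m hm d ⟨x, hx, y, hy, rfl⟩
    have h1 := Zadd α hα β hβ hab m hm x hx
    have h2 := Zadd _ hab _ (rs_neg hΦ hβ) (by simpa using hα) _ h1 _ (Zneg β hβ y hy)
    rw [add_neg_cancel_right] at h2
    convert h2 using 1
    abel
  have Dsub : ∀ α ∈ Φ, ∀ β ∈ Φ, α + β ∈ Φ → D β ⊆ D α := by
    intro α hα β hβ hab d hd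
    obtain ⟨m, hm⟩ := Zne α hα
    exact ⟨m + d, stab α hα β hβ hab m hm d hd, m, hm, by abel⟩
  have Dadd : ∀ α ∈ Φ, ∀ β ∈ Φ, α + β ∈ Φ → D α = D β := fun α hα β hβ hab =>
    Set.Subset.antisymm (Dsub β hβ α hα (by rwa [add_comm])) (Dsub α hα β hβ hab)
  let α0 := b ⟨0, by omega⟩
  have hα0 : α0 ∈ Φ := hbΦ _
  have Dconst : ∀ α ∈ Φ, D α = D α0 := fun α hα =>
    rs_const hΦ hred hirr D Dneg Dadd hα0 hα
  have Zst : ∀ α ∈ Φ, ∀ m ∈ Z α, ∀ d ∈ D α0, m + d ∈ Z α := by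
    intro α hα m hm d hd
    obtain ⟨β, hβ, hab⟩ := rs_triple hΦ hred hirr hn b hbΦ hbli hα
    exact stab α hα β hβ hab m hm d (by rwa [Dconst β hβ])
  let L : AddSubgroup M :=
    { carrier := D α0
      zero_mem' := by
        obtain ⟨m, hm⟩ := Zne α0 hα0
        exact ⟨m, hm, m, hm, by abel⟩
      add_mem' := by
        rintro d e ⟨x, hx, y, hy, rfl⟩ he
        exact ⟨x + e, Zst α0 hα0 x hx e he, y, hy, by abel⟩
      neg_mem' := by
        intro d hd
        exact Dneg' _ d hd }
  have memL : ∀ d, d ∈ L ↔ d ∈ D α0 := fun d => Iff.rfl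
  refine ⟨L, z, ?_⟩
  have main : ∀ c : Fin n → ℤ, ∑ i, (c i : ℝ) • b i ∈ Φ →
      ∑ i, c i • z i ∈ Z (∑ i, (c i : ℝ) • b i) := by
    intro c hc
    obtain ⟨c', hc', hs⟩ := hbase _ hc
    have hcc : c = c' := by
      have h0 : ∑ j, ((c j : ℝ) - c' j) • b j = 0 := by
        simp only [sub_smul, Finset.sum_sub_distrib]
        rw [hc', sub_self]
      funext j
      have := Fintype.linearIndependent_iff.1 hbli _ h0 j
      have : (c j : ℝ) = c' j := by linarith
      exact_mod_cast this
    subst hcc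
    rcases hs with hs | hs
    · have hnn : 0 ≤ ∑ i, c i := Finset.sum_nonneg fun i _ => hs i
      exact rs_height hΦ hred b hbΦ hbli Z Zadd z hz (∑ i, c i).toNat c hs
        (Int.toNat_of_nonneg hnn).symm hc
    · have hs' : ∀ i, 0 ≤ (-c) i := fun i => by simpa using hs i
      have hnn : 0 ≤ ∑ i, (-c) i := Finset.sum_nonneg fun i _ => hs' i
      have e : ∑ i, (((-c) i : ℤ) : ℝ) • b i = - ∑ i, (c i : ℝ) • b i := by
        simp
      have hm : ∑ i, (((-c) i : ℤ) : ℝ) • b i ∈ Φ := by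
        rw [e]; exact rs_neg hΦ hc
      have := rs_height hΦ hred b hbΦ hbli Z Zadd z hz (∑ i, (-c) i).toNat (-c) hs'
        (Int.toNat_of_nonneg hnn).symm hm
      have := Zneg _ hm _ this
      rw [e, neg_neg] at this
      simpa using this
  intro c hc m
  have hmain := main c hc
  rw [memL]
  constructor
  · intro hm
    rw [← Dconst _ hc]
    exact ⟨m, hm, _, hmain, rfl⟩
  · intro hd
    have := Zst _ hc _ hmain _ hd
    simpa using this

/-- the ambient set of real roots -/
def RR (Φ : Set W) (k : ℕ) : Set (W × (Fin k → ℝ)) :=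
  {x : W × (Fin k → ℝ) | x.1 ∈ Φ ∧ ∃ m : Fin k → ℤ, x.2 = fun t => (m t : ℝ)}

/-- the standard subsets -/
def SS {n k : ℕ} (Φ : Set W) (b : Fin n → W) (L : AddSubgroup (Fin k → ℤ)) (z : Fin n → Fin k → ℤ) :
    Set (W × (Fin k → ℝ)) :=
  {x | x.1 ∈ Φ ∧ ∃ c : Fin n → ℤ, x.1 = ∑ i, (c i : ℝ) • b i ∧ ∃ m ∈ L,
    x.2 = fun t => (((∑ i, c i • z i + m) t : ℤ) : ℝ)}

lemma castfun_inj {k : ℕ} {m m' : Fin k → ℤ}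
    (h : (fun t => (m t : ℝ)) = fun t => (m' t : ℝ)) : m = m' := by
  funext t
  exact_mod_cast congrFun h t

lemma coef_inj {n : ℕ} {b : Fin n → W} (hbli : LinearIndependent ℝ b) {c c' : Fin n → ℤ}
    (h : ∑ i, (c i : ℝ) • b i = ∑ i, (c' i : ℝ) • b i) : c = c' := by
  have h0 : ∑ j, ((c j : ℝ) - c' j) • b j = 0 := by
    simp only [sub_smul, Finset.sum_sub_distrib]
    rw [h, sub_self]
  funext j
  have := Fintype.linearIndependent_iff.1 hbli _ h0 j
  have : (c j : ℝ) = c' j := by linarith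
  exact_mod_cast this

lemma mem_SS {n k : ℕ} {Φ : Set W} {b : Fin n → W} (hbli : LinearIndependent ℝ b)
    {L : AddSubgroup (Fin k → ℤ)} {z : Fin n → Fin k → ℤ} {c : Fin n → ℤ}
    (hc : ∑ i, (c i : ℝ) • b i ∈ Φ) (m : Fin k → ℤ) :
    (∑ i, (c i : ℝ) • b i, fun t => (m t : ℝ)) ∈ SS Φ b L z ↔ m - ∑ i, c i • z i ∈ L := by
  constructor
  · rintro ⟨_, c', h1, m', hm', h2⟩
    have := coef_inj hbli h1
    subst this
    have := castfun_inj h2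
    rw [this]; simpa using hm'
  · intro h
    exact ⟨hc, c, rfl, _, h, by simp⟩

lemma mem_SS_b {n k : ℕ} {Φ : Set W} {b : Fin n → W} (hbΦ : ∀ i, b i ∈ Φ)
    (hbli : LinearIndependent ℝ b)
    {L : AddSubgroup (Fin k → ℤ)} {z : Fin n → Fin k → ℤ} (i : Fin n) (m : Fin k → ℤ) :
    (b i, fun t => (m t : ℝ)) ∈ SS Φ b L z ↔ m - z i ∈ L := by
  have e : ∑ j, (((Pi.single i 1 : Fin n → ℤ) j : ℤ) : ℝ) • b j = b i := by
    simp [Pi.single_apply]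
  have e' : ∑ j, (Pi.single i 1 : Fin n → ℤ) j • z j = z i := by
    simp [Pi.single_apply]
  have := mem_SS (Φ := Φ) hbli (L := L) (z := z) (c := Pi.single i 1) (by rw [e]; exact hbΦ i) m
  rwa [e, e'] at this

lemma SS_closed {Φ : Set W} (hΦ : IsRootSystem Φ)
    {n k : ℕ} (hn : 2 ≤ n) (b : Fin n → W) (hbΦ : ∀ i, b i ∈ Φ) (hbli : LinearIndependent ℝ b)
    (L : AddSubgroup (Fin k → ℤ)) (hL : L ≠ ⊤) (z : Fin n → Fin k → ℤ) :
    IsClosedSubSys (RR Φ k) (SS Φ b L z) := by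
  refine ⟨⟨⟨(b ⟨0, by omega⟩, fun t => (z ⟨0, by omega⟩ t : ℝ)), ?_⟩, ?_, ?_, ?_⟩, ?_⟩
  · rw [mem_SS_b hbΦ hbli]; simp
  · rintro x ⟨h1, c, _, m, _, h2⟩
    exact ⟨h1, _, h2⟩
  · intro h
    apply hL
    rw [AddSubgroup.eq_top_iff']
    intro m
    have : (b ⟨0, by omega⟩, fun t => ((m + z ⟨0, by omega⟩) t : ℝ)) ∈ SS Φ b L z := by
      rw [h]; exact ⟨hbΦ _, _, rfl⟩
    rw [mem_SS_b hbΦ hbli (m := m + z ⟨0, by omega⟩)] at this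
    simpa using this
  · rintro ⟨α, y⟩ ⟨hα, c, hc, m, hm, hy⟩ ⟨β, w⟩ ⟨hβ, d, hd, p, hp, hw⟩
    dsimp only at *
    obtain ⟨P, hP⟩ := hΦ.2.2.2.2 α hα β hβ
    refine ⟨hΦ.2.2.2.1 α hα β hβ, fun i => d i - P * c i, ?_, p - P • m,
      sub_mem hp (L.zsmul_mem hm P), ?_⟩
    · simp only [reflAff, reflRoot, hP]
      push_cast
      simp only [sub_smul, Finset.sum_sub_distrib, mul_smul, ← Finset.smul_sum]
      rw [← hc, ← hd]
    · simp only [reflAff, hP, hy, hw]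
      funext t
      simp [sub_mul, Finset.sum_sub_distrib, Finset.mul_sum, mul_assoc, mul_add]
      ring
  · rintro ⟨α, y⟩ ⟨hα, c, hc, m, hm, hy⟩ ⟨β, w⟩ ⟨hβ, d, hd, p, hp, hw⟩ hxy
    dsimp only at *
    refine ⟨hxy.1, fun i => c i + d i, ?_, m + p, add_mem hm hp, ?_⟩
    · simp only [Prod.mk_add_mk]
      push_cast
      simp only [add_smul, Finset.sum_add_distrib]
      rw [← hc, ← hd]
    · simp only [Prod.mk_add_mk, hy, hw]
      funext t
      simp [add_mul, Finset.sum_add_distrib]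
      ring

lemma SS_Gr {Φ : Set W} {n k : ℕ} (b : Fin n → W)
    (hbase : ∀ α ∈ Φ, ∃ c : Fin n → ℤ,
      α = ∑ i, (c i : ℝ) • b i ∧ ((∀ i, 0 ≤ c i) ∨ (∀ i, c i ≤ 0)))
    (L : AddSubgroup (Fin k → ℤ)) (z : Fin n → Fin k → ℤ) : Gr (SS Φ b L z) = Φ := by
  ext α
  constructor
  · rintro ⟨y, h⟩; exact h.1
  · intro h
    obtain ⟨c, hc, _⟩ := hbase α h
    exact ⟨_, h, c, hc, 0, zero_mem _, rfl⟩

lemma closed_eq_SS {Φ : Set W} (hΦ : IsRootSystem Φ) (hred : IsReduced Φ) (hirr : IsIrreducible Φ)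
    {n k : ℕ} (hn : 2 ≤ n) (b : Fin n → W) (hbΦ : ∀ i, b i ∈ Φ) (hbli : LinearIndependent ℝ b)
    (hbase : ∀ α ∈ Φ, ∃ c : Fin n → ℤ,
      α = ∑ i, (c i : ℝ) • b i ∧ ((∀ i, 0 ≤ c i) ∨ (∀ i, c i ≤ 0)))
    {Ψ : Set (W × (Fin k → ℝ))} (hΨ : IsClosedSubSys (RR Φ k) Ψ) (hG : Gr Ψ = Φ) :
    ∃ L z, L ≠ ⊤ ∧ Ψ = SS Φ b L z := by
  obtain ⟨⟨_, hsub, hne, hrefl⟩, hadd⟩ := hΨ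
  obtain ⟨L, z, h⟩ := struct_lemma hΦ hred hirr hn b hbΦ hbli hbase
    (fun α => {m : Fin k → ℤ | (α, fun t => (m t : ℝ)) ∈ Ψ})
    (by
      intro α hα
      rw [← hG] at hα
      obtain ⟨y, hy⟩ := hα
      obtain ⟨_, m, hm⟩ := hsub hy
      dsimp only at hm
      exact ⟨m, by rw [hm] at hy; exact hy⟩)
    (by
      intro α hα m hm
      have hα0 : α ≠ 0 := fun h0 => hΦ.2.1 (h0 ▸ hα)
      have := hrefl _ hm _ hm
      simp only [reflAff, reflRoot, pairing_self hα0] at this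
      show (-α, fun t => ((-m) t : ℝ)) ∈ Ψ
      convert this using 2
      · module
      · funext t; simp; ring)
    (by
      intro α hα β hβ hab m hm m' hm'
      have := hadd _ hm _ hm' ⟨hab, m + m', by funext t; simp⟩
      show (α + β, fun t => ((m + m') t : ℝ)) ∈ Ψ
      convert this using 2
      · rfl
      · funext t; simp)
  have hEq : Ψ = SS Φ b L z := by
    ext ⟨α, y⟩
    constructor
    · intro hx
      obtain ⟨hα, m, hm⟩ := hsub hx
      dsimp only at hα hm
      obtain ⟨c, hc, _⟩ := hbase α hα
      subst hc hm
      rw [mem_SS hbli hα]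
      exact (h c hα m).1 hx
    · rintro ⟨hα, c, hc, m, hm, hy⟩
      dsimp only at hα hc hy
      subst hc hy
      exact (h c hα _).2 (by simpa using hm)
  refine ⟨L, z, ?_, hEq⟩
  rintro rfl
  apply hne
  apply Set.Subset.antisymm hsub
  rintro ⟨α, y⟩ ⟨hα, m, hm⟩
  dsimp only at hα hm
  obtain ⟨c, hc, _⟩ := hbase α hα
  subst hc hm
  rw [hEq, mem_SS hbli hα]
  trivial

lemma SS_le {Φ : Set W} {n k : ℕ} (hn : 2 ≤ n) {b : Fin n → W} (hbΦ : ∀ i, b i ∈ Φ)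
    (hbli : LinearIndependent ℝ b)
    {L L' : AddSubgroup (Fin k → ℤ)} {z z' : Fin n → Fin k → ℤ}
    (h : SS Φ b L z ⊆ SS Φ b L' z') : L ≤ L' ∧ ∀ i, z i - z' i ∈ L' := by
  have h2 : ∀ i, z i - z' i ∈ L' := fun i =>
    (mem_SS_b hbΦ hbli i (z i)).1 (h ((mem_SS_b hbΦ hbli i (z i)).2 (by simp)))
  refine ⟨fun m hm => ?_, h2⟩
  have h1 := (mem_SS_b hbΦ hbli _ _).1 (h ((mem_SS_b hbΦ hbli ⟨0, by omega⟩
    (z ⟨0, by omega⟩ + m)).2 (by simpa using hm)))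
  have := sub_mem h1 (h2 ⟨0, by omega⟩)
  simpa using this

lemma SS_congr {Φ : Set W} {n k : ℕ} {b : Fin n → W}
    {L : AddSubgroup (Fin k → ℤ)} {z z' : Fin n → Fin k → ℤ}
    (h : ∀ i, z i - z' i ∈ L) : SS Φ b L z ⊆ SS Φ b L z' := by
  rintro x ⟨hx, c, hc, m, hm, hy⟩
  refine ⟨hx, c, hc, ∑ i, c i • (z i - z' i) + m,
    add_mem (sum_mem fun i _ => L.zsmul_mem (h i) _) hm, ?_⟩
  have e : ∑ i, c i • z' i + (∑ i, c i • (z i - z' i) + m) = ∑ i, c i • z i + m := by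
    simp only [smul_sub, Finset.sum_sub_distrib]
    abel
  rw [hy, e]

theorem max_iff {Φ : Set W} (hΦ : IsRootSystem Φ) (hred : IsReduced Φ) (hirr : IsIrreducible Φ)
    {n k : ℕ} (hn : 2 ≤ n) (b : Fin n → W) (hbΦ : ∀ i, b i ∈ Φ) (hbli : LinearIndependent ℝ b)
    (hbase : ∀ α ∈ Φ, ∃ c : Fin n → ℤ,
      α = ∑ i, (c i : ℝ) • b i ∧ ((∀ i, 0 ≤ c i) ∨ (∀ i, c i ≤ 0)))
    (Ψ : Set (W × (Fin k → ℝ))) :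
    (IsMaxClosedSubSys (RR Φ k) Ψ ∧ Gr Ψ = Φ) ↔ ∃ L z, IsCoatom L ∧ Ψ = SS Φ b L z := by
  constructor
  · rintro ⟨⟨hcl, hmax⟩, hG⟩
    obtain ⟨L, z, hL, rfl⟩ := closed_eq_SS hΦ hred hirr hn b hbΦ hbli hbase hcl hG
    refine ⟨L, z, ⟨hL, fun L' hL' => ?_⟩, rfl⟩
    by_contra hc
    have := hmax (SS Φ b L' z) (SS_closed hΦ hn b hbΦ hbli L' hc z) (by
      rintro x ⟨hx, c, hc, m, hm, hy⟩
      exact ⟨hx, c, hc, m, hL'.le hm, hy⟩)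
    exact absurd (SS_le hn hbΦ hbli this.le).1 (not_le_of_gt hL')
  · rintro ⟨L, z, hL, rfl⟩
    refine ⟨⟨SS_closed hΦ hn b hbΦ hbli L hL.1 z, fun Ψ' hcl hsub => ?_⟩, SS_Gr b hbase L z⟩
    have hG : Gr Ψ' = Φ := by
      apply Set.Subset.antisymm
      · rintro α ⟨y, hy⟩; exact (hcl.1.2.1 hy).1
      · intro α hα
        rw [← SS_Gr b hbase L z] at hα
        obtain ⟨y, hy⟩ := hα
        exact ⟨y, hsub hy⟩
    obtain ⟨L', z', hL', rfl⟩ := closed_eq_SS hΦ hred hirr hn b hbΦ hbli hbase hcl hG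
    obtain ⟨h1, h2⟩ := SS_le hn hbΦ hbli hsub
    have : L = L' := by
      rcases h1.eq_or_lt with h | h
      · exact h
      · exact absurd (hL.2 _ h) hL'
    subst this
    exact Set.Subset.antisymm (SS_congr fun i => by rw [← neg_sub]; exact neg_mem (h2 i)) hsub

end Struct
section HNF

/-- shape of a Hermite normal form matrix of prime determinant -/
structure Shape {k : ℕ} (q : ℕ) (l : Fin k) (U : Matrix (Fin k) (Fin k) ℤ) : Prop where
  diag : U l l = q
  diag1 : ∀ i, i ≠ l → U i i = 1
  off : ∀ i j, i ≠ j → j ≠ l → U i j = 0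
  below : ∀ i, l < i → U i l = 0
  nonneg : ∀ i, i ≠ l → 0 ≤ U i l
  lt : ∀ i, i ≠ l → U i l < q

lemma hnf_shape {k q : ℕ} (hq : q.Prime) {U : Matrix (Fin k) (Fin k) ℤ} (hU : IsHNF U)
    (hdet : U.det = (q : ℤ)) : ∃ l, Shape q l U := by
  obtain ⟨h1, h2, h3⟩ := hU
  have hd : U.det = ∏ i, U i i := Matrix.det_of_upperTriangular (fun i j hij => h1 i j hij)
  rw [hd] at hdet
  have hqp : Prime (q : ℤ) := Nat.prime_iff_prime_int.1 hq
  obtain ⟨l, -, hl⟩ := (Prime.dvd_finset_prod_iff hqp _).1 (dvd_of_eq hdet.symm)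
  obtain ⟨t, ht⟩ := hl
  have hq0 : (0 : ℤ) < q := by exact_mod_cast hq.pos
  rw [← Finset.mul_prod_erase _ _ (Finset.mem_univ l), ht] at hdet
  have hunit : t * ∏ i ∈ Finset.univ.erase l, U i i = 1 := by
    apply mul_left_cancel₀ hq0.ne'
    rw [← mul_assoc, hdet, mul_one]
  have htpos : 0 < t := by
    have := h2 l; rw [ht] at this
    exact (pos_iff_pos_of_mul_pos this).1 hq0
  have ht1 : t = 1 := by
    rcases Int.isUnit_iff.1 (IsUnit.of_mul_eq_one _ hunit) with h | h
    · exact h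
    · omega
  have hl' : U l l = q := by rw [ht, ht1, mul_one]
  rw [ht1, one_mul] at hunit
  have hdiag : ∀ i, i ≠ l → U i i = 1 := by
    intro i hi
    have hdv : U i i ∣ 1 := by
      rw [← hunit]
      exact Finset.dvd_prod_of_mem (fun i => U i i) (by simp [hi])
    rcases Int.isUnit_iff.1 (isUnit_of_dvd_one hdv) with h | h
    · exact h
    · have := h2 i; omega
  refine ⟨l, hl', hdiag, ?_, fun i hi => h1 i l hi, ?_, ?_⟩
  · intro i j hij hj
    rcases lt_or_gt_of_ne hij with h | h
    · have := h3 i j h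
      rw [hdiag j hj] at this
      omega
    · exact h1 i j h
  · intro i hi
    rcases lt_or_gt_of_ne hi with h | h
    · exact (h3 i l h).1
    · rw [h1 i l h]
  · intro i hi
    rcases lt_or_gt_of_ne hi with h | h
    · rw [← hl']; exact (h3 i l h).2
    · rw [h1 i l h]; exact hq0

lemma Shape.hnf {k q : ℕ} (hq : q.Prime) {l : Fin k} {U : Matrix (Fin k) (Fin k) ℤ}
    (h : Shape q l U) : IsHNF U ∧ U.det = (q : ℤ) := by
  have h1 : ∀ i j : Fin k, j < i → U i j = 0 := by
    intro i j hij
    by_cases hj : j = l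
    · subst hj; exact h.below i hij
    · exact h.off i j hij.ne' hj
  refine ⟨⟨h1, ?_, ?_⟩, ?_⟩
  · intro j
    by_cases hj : j = l
    · subst hj; rw [h.diag]; exact_mod_cast hq.pos
    · rw [h.diag1 j hj]; exact one_pos
  · intro i j hij
    by_cases hj : j = l
    · subst hj; rw [h.diag]; exact ⟨h.nonneg i hij.ne, h.lt i hij.ne⟩
    · rw [h.off i j hij.ne hj, h.diag1 j hj]; simp
  · rw [Matrix.det_of_upperTriangular (fun i j hij => h1 i j hij),
      ← Finset.mul_prod_erase _ _ (Finset.mem_univ l), h.diag, Finset.prod_eq_one, mul_one]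
    intro i hi
    exact h.diag1 i (by simpa using hi)

lemma Shape.row {k q : ℕ} {l : Fin k} {U : Matrix (Fin k) (Fin k) ℤ} (h : Shape q l U) :
    U l = fun t => if t = l then (q : ℤ) else 0 := by
  funext t
  by_cases ht : t = l
  · subst ht; simp [h.diag]
  · simp [ht, h.off l t (Ne.symm ht) ht]

lemma Shape.row_unique {k q : ℕ} (hq : q.Prime) {l : Fin k} {U : Matrix (Fin k) (Fin k) ℤ}
    (h : Shape q l U) (l' : Fin k) (h' : U l' = fun t => if t = l' then (q : ℤ) else 0) :
    l' = l := by
  by_contra hc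
  have h1 := h.diag1 l' hc
  rw [h'] at h1
  simp at h1
  exact hq.one_lt.ne' h1

/-- the linear functional defining the lattice -/
def phi {k : ℕ} (U : Matrix (Fin k) (Fin k) ℤ) (l : Fin k) : (Fin k → ℤ) →+ ℤ where
  toFun x := x l - ∑ i ∈ Finset.univ.erase l, x i * U i l
  map_zero' := by simp
  map_add' x y := by
    simp only [Pi.add_apply, add_mul, Finset.sum_add_distrib]; ring

lemma phi_apply {k : ℕ} (U : Matrix (Fin k) (Fin k) ℤ) (l : Fin k) (x : Fin k → ℤ) :
    phi U l x = x l - ∑ i ∈ Finset.univ.erase l, x i * U i l := rfl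

lemma phi_single {k : ℕ} (U : Matrix (Fin k) (Fin k) ℤ) (l : Fin k) (a : ℤ) :
    phi U l (Pi.single l a) = a := by
  rw [phi_apply, Finset.sum_eq_zero]
  · simp
  · intro i hi
    simp at hi
    simp [hi]

lemma phi_single' {k : ℕ} (U : Matrix (Fin k) (Fin k) ℤ) (l i : Fin k) (hi : i ≠ l) (a : ℤ) :
    phi U l (Pi.single i a) = - (a * U i l) := by
  rw [phi_apply, Finset.sum_eq_single i]
  · simp [hi.symm]
  · intro j _ hj
    simp [hj]
  · intro h; simp [hi] at h

lemma Shape.row' {k q : ℕ} {l : Fin k} {U : Matrix (Fin k) (Fin k) ℤ} (h : Shape q l U)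
    {i : Fin k} (hi : i ≠ l) : U i = Pi.single i 1 + Pi.single l (U i l) := by
  funext t
  by_cases ht : t = l
  · subst ht; simp [hi]
  · by_cases hti : t = i
    · subst hti; simp [ht, h.diag1 t ht]
    · simp [ht, hti, h.off i t (Ne.symm hti) ht]

lemma Shape.row'' {k q : ℕ} {l : Fin k} {U : Matrix (Fin k) (Fin k) ℤ} (h : Shape q l U) :
    U l = Pi.single l (q : ℤ) := by
  rw [h.row]; funext t; simp [Pi.single_apply]

lemma Shape.mem {k q : ℕ} {l : Fin k} {U : Matrix (Fin k) (Fin k) ℤ} (h : Shape q l U)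
    (x : Fin k → ℤ) :
    x ∈ AddSubgroup.closure (Set.range fun i => U i) ↔ (q : ℤ) ∣ phi U l x := by
  constructor
  · intro hx
    induction hx using AddSubgroup.closure_induction with
    | mem x hx =>
      obtain ⟨i, rfl⟩ := hx
      dsimp only
      by_cases hi : i = l
      · subst hi; rw [h.row'', phi_single]
      · rw [h.row' hi, map_add, phi_single, phi_single' _ _ _ hi]; simp
    | zero => simp
    | add x y _ _ hx hy => rw [map_add]; exact dvd_add hx hy
    | neg x _ hx => rw [map_neg]; exact (dvd_neg).2 hx
  · rintro ⟨t, ht⟩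
    have e : x = t • U l + ∑ i ∈ Finset.univ.erase l, x i • U i := by
      rw [phi_apply] at ht
      funext j
      by_cases hj : j = l
      · subst hj
        simp only [Pi.add_apply, Finset.sum_apply, Pi.smul_apply, smul_eq_mul, h.diag]
        linarith
      · simp only [Pi.add_apply, Finset.sum_apply, Pi.smul_apply, smul_eq_mul]
        rw [Finset.sum_eq_single j]
        · rw [h.off l j (Ne.symm hj) hj, h.diag1 j hj]; ring
        · intro i _ hi
          rw [h.off i j hi hj]; ring
        · intro hh; simp [hj] at hh
    rw [e]
    have hr : ∀ i, U i ∈ AddSubgroup.closure (Set.range fun i => U i) :=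
      fun i => AddSubgroup.subset_closure ⟨i, rfl⟩
    exact add_mem (AddSubgroup.zsmul_mem _ (hr l) _)
      (sum_mem fun i _ => AddSubgroup.zsmul_mem _ (hr i) _)

lemma Shape.coatom {k q : ℕ} (hq : q.Prime) {l : Fin k} {U : Matrix (Fin k) (Fin k) ℤ}
    (h : Shape q l U) : IsCoatom (AddSubgroup.closure (Set.range fun i => U i)) := by
  have hqp : Prime (q : ℤ) := Nat.prime_iff_prime_int.1 hq
  constructor
  · intro ht
    have : Pi.single l (1 : ℤ) ∈ AddSubgroup.closure (Set.range fun i => U i) := by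
      rw [ht]; trivial
    rw [h.mem, phi_single] at this
    exact hqp.not_dvd_one this
  · intro L' hL'
    obtain ⟨y, hy, hyn⟩ := SetLike.exists_of_lt hL'
    rw [h.mem] at hyn
    have hcop : IsCoprime (q : ℤ) (phi U l y) := (Prime.coprime_iff_not_dvd hqp).2 hyn
    obtain ⟨u, v, huv⟩ := hcop
    rw [AddSubgroup.eq_top_iff']
    intro x
    have hx : x - (phi U l x * v) • y ∈ L' := by
      apply hL'.le
      rw [h.mem, map_sub, map_zsmul, smul_eq_mul]
      refine ⟨phi U l x * u, ?_⟩
      linear_combination (- phi U l x) * huv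
    have := add_mem hx (L'.zsmul_mem hy (phi U l x * v))
    simpa using this

lemma eq_of_dvd_sub {q : ℕ} {a a' : ℤ} (h0 : 0 ≤ a) (h1 : a < q) (h0' : 0 ≤ a') (h1' : a' < q)
    (h : (q : ℤ) ∣ a - a') : a = a' := by
  have := Int.eq_zero_of_abs_lt_dvd h (by rw [abs_lt]; constructor <;> linarith)
  linarith

lemma Shape.unique {k q q' : ℕ} (hq : q.Prime) (hq' : q'.Prime) {l l' : Fin k}
    {U U' : Matrix (Fin k) (Fin k) ℤ} (h : Shape q l U) (h' : Shape q' l' U')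
    (hL : AddSubgroup.closure (Set.range fun i => U i) =
      AddSubgroup.closure (Set.range fun i => U' i)) : q = q' ∧ l = l' ∧ U = U' := by
  have key : ∀ x, (q : ℤ) ∣ phi U l x ↔ (q' : ℤ) ∣ phi U' l' x := by
    intro x; rw [← h.mem, ← h'.mem, hL]
  have hqp : Prime (q : ℤ) := Nat.prime_iff_prime_int.1 hq
  have hqp' : Prime (q' : ℤ) := Nat.prime_iff_prime_int.1 hq'
  have hl : l = l' := by
    rcases lt_trichotomy l l' with hlt | hlt | hlt
    · exfalso
      have := (key (Pi.single l' 1)).1 (by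
        rw [phi_single' _ _ _ hlt.ne', h.below _ hlt]; simp)
      rw [phi_single] at this
      exact hqp'.not_dvd_one this
    · exact hlt
    · exfalso
      have := (key (Pi.single l 1)).2 (by
        rw [phi_single' _ _ _ hlt.ne', h'.below _ hlt]; simp)
      rw [phi_single] at this
      exact hqp.not_dvd_one this
  subst hl
  have hqq : q = q' := by
    apply Nat.dvd_antisymm
    · have := (key (Pi.single l q')).2 (by rw [phi_single])
      rw [phi_single] at this
      exact_mod_cast this
    · have := (key (Pi.single l q)).1 (by rw [phi_single])
      rw [phi_single] at this
      exact_mod_cast this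
  subst hqq
  refine ⟨rfl, rfl, ?_⟩
  funext i
  by_cases hi : i = l
  · subst hi; rw [h.row, h'.row]
  · rw [h.row' hi, h'.row' hi]
    congr 2
    have := (key (U i)).1 (by
      rw [← h.mem]; exact AddSubgroup.subset_closure ⟨i, rfl⟩)
    rw [h.row' hi, map_add, phi_single, phi_single' _ _ _ hi] at this
    apply eq_of_dvd_sub (h.nonneg i hi) (h.lt i hi) (h'.nonneg i hi) (h'.lt i hi)
    convert this using 1
    ring

lemma coatom_shape {k : ℕ} {L : AddSubgroup (Fin k → ℤ)} (hL : IsCoatom L) :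
    ∃ (q : ℕ) (l : Fin k) (U : Matrix (Fin k) (Fin k) ℤ), q.Prime ∧ Shape q l U ∧
      L = AddSubgroup.closure (Set.range fun i => U i) ∧
      ∀ x : Fin k → ℤ, ∃ a : ℤ, 0 ≤ a ∧ a < q ∧ x - Pi.single l a ∈ L := by
  classical
  have hex : ∃ i : Fin k, Pi.single i (1 : ℤ) ∉ L := by
    by_contra hc
    push Not at hc
    apply hL.1
    rw [AddSubgroup.eq_top_iff']
    intro x
    have : x = ∑ i, x i • (Pi.single i (1 : ℤ) : Fin k → ℤ) := by
      funext j; simp [Finset.sum_apply, Pi.single_apply]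
    rw [this]
    exact sum_mem fun i _ => L.zsmul_mem (hc i) _
  have hne : (Finset.univ.filter fun i : Fin k => Pi.single i (1 : ℤ) ∉ L).Nonempty := by
    obtain ⟨i, hi⟩ := hex
    exact ⟨i, by simpa using hi⟩
  obtain ⟨l, hl, hlmax⟩ := Finset.exists_max_image _ id hne
  simp only [Finset.mem_filter, Finset.mem_univ, true_and, id] at hl hlmax
  have hlmax' : ∀ i, l < i → Pi.single i (1 : ℤ) ∈ L := by
    intro i hi
    by_contra hc
    exact absurd (hlmax i hc) (not_le_of_gt hi)
  have gen : ∀ y, y ∉ L → ∀ x, ∃ s : ℤ, x - s • y ∈ L := by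
    intro y hy x
    have htop : L ⊔ AddSubgroup.zmultiples y = ⊤ := by
      apply hL.2
      refine lt_of_le_of_ne le_sup_left fun h => hy ?_
      rw [h]
      exact (le_sup_right : AddSubgroup.zmultiples y ≤ _) (AddSubgroup.mem_zmultiples y)
    have hx : x ∈ L ⊔ AddSubgroup.zmultiples y := by rw [htop]; trivial
    obtain ⟨p, hp, r, hr, hpr⟩ := AddSubgroup.mem_sup.1 hx
    obtain ⟨s, hs⟩ := AddSubgroup.mem_zmultiples_iff.1 hr
    exact ⟨s, by rw [← hpr, ← hs]; simpa using hp⟩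
  have smul1 : ∀ a : ℤ, (Pi.single l a : Fin k → ℤ) = a • Pi.single l (1 : ℤ) := by
    intro a; funext j; simp [Pi.single_apply]
  let J : AddSubgroup ℤ := L.comap (AddMonoidHom.single (fun _ : Fin k => ℤ) l)
  have hJ : ∀ a : ℤ, a ∈ J ↔ (Pi.single l a : Fin k → ℤ) ∈ L := fun a => Iff.rfl
  obtain ⟨g, hg⟩ := Int.subgroup_cyclic J
  obtain ⟨q, hqJ⟩ : ∃ q : ℕ, ∀ a : ℤ, a ∈ J ↔ (q : ℤ) ∣ a := by
    refine ⟨g.natAbs, fun a => ?_⟩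
    rw [hg, ← AddSubgroup.zmultiples_eq_closure, Int.mem_zmultiples_iff, Int.natAbs_dvd]
  have inv : ∀ t : ℤ, ¬ (q : ℤ) ∣ t → ∃ s : ℤ, (q : ℤ) ∣ 1 - s * t := by
    intro t ht
    rw [← hqJ, hJ] at ht
    obtain ⟨s, hs⟩ := gen _ ht (Pi.single l 1)
    refine ⟨s, ?_⟩
    rw [← hqJ, hJ]
    convert hs using 1
    funext j
    by_cases hj : j = l
    · subst hj; simp
    · simp [hj]
  have hq1 : q ≠ 1 := by
    rintro rfl
    exact hl ((hJ 1).1 ((hqJ 1).2 (by simp)))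
  have hq0 : q ≠ 0 := by
    rintro rfl
    obtain ⟨s, hs⟩ := inv 2 (by simp)
    simp at hs
    omega
  have hq : q.Prime := by
    rw [Nat.prime_def]
    refine ⟨by omega, fun m hm => ?_⟩
    by_cases h : (q : ℤ) ∣ m
    · right
      exact Nat.dvd_antisymm hm (by exact_mod_cast h)
    · left
      obtain ⟨s, hs⟩ := inv m h
      have hmq : (m : ℤ) ∣ q := by exact_mod_cast hm
      have h1 : (m : ℤ) ∣ 1 := by
        have := dvd_add (hmq.trans hs) (Dvd.intro_left s rfl : (m : ℤ) ∣ s * m)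
        simpa using this
      have : m ∣ 1 := by exact_mod_cast h1
      simpa using this
  have hqpos : (0 : ℤ) < q := by exact_mod_cast hq.pos
  have red : ∀ x : Fin k → ℤ, ∃ a : ℤ, 0 ≤ a ∧ a < q ∧ x - Pi.single l a ∈ L := by
    intro x
    obtain ⟨s, hs⟩ := gen _ hl x
    refine ⟨s % q, Int.emod_nonneg _ hqpos.ne', Int.emod_lt_of_pos _ hqpos, ?_⟩
    have h2 : (Pi.single l (q * (s / q)) : Fin k → ℤ) ∈ L :=
      (hJ _).1 ((hqJ _).2 (Dvd.intro _ rfl))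
    have := add_mem hs h2
    convert this using 1
    rw [← smul1, sub_add, ← Pi.single_sub]
    congr 2
    have := Int.emod_add_mul_ediv s q
    linarith
  choose a ha0 haq haL using fun i : Fin k => red (-Pi.single i 1)
  let U : Matrix (Fin k) (Fin k) ℤ := fun i =>
    if i = l then Pi.single l (q : ℤ) else
      Pi.single i 1 + Pi.single l (if l < i then 0 else a i)
  have hUl : U l = Pi.single l (q : ℤ) := by simp [U]
  have hUi : ∀ i, i ≠ l → U i = Pi.single i 1 + Pi.single l (if l < i then 0 else a i) := by
    intro i hi; simp [U, hi]
  have hUil : ∀ i, i ≠ l → U i l = if l < i then 0 else a i := by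
    intro i hi; rw [hUi i hi]; simp [hi]
  have hsh : Shape q l U := by
    refine ⟨?_, ?_, ?_, ?_, ?_, ?_⟩
    · rw [hUl]; simp
    · intro i hi; rw [hUi i hi]; simp [hi]
    · intro i j hij hj
      by_cases hi : i = l
      · subst hi; rw [hUl]; simp [hj]
      · rw [hUi i hi]; simp [hj, Ne.symm hij]
    · intro i hi; rw [hUil i hi.ne', if_pos hi]
    · intro i hi; rw [hUil i hi]; split_ifs
      · exact le_rfl
      · exact ha0 i
    · intro i hi; rw [hUil i hi]; split_ifs
      · exact hqpos
      · exact haq i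
  refine ⟨q, l, U, hq, hsh, ?_, red⟩
  have hle : AddSubgroup.closure (Set.range fun i => U i) ≤ L := by
    rw [AddSubgroup.closure_le]
    rintro _ ⟨i, rfl⟩
    dsimp only
    by_cases hi : i = l
    · subst hi; rw [hUl]; exact (hJ _).1 ((hqJ _).2 dvd_rfl)
    · rw [hUi i hi]
      split_ifs with h
      · simpa using hlmax' i h
      · have := neg_mem (haL i)
        rw [neg_sub, sub_neg_eq_add, add_comm] at this
        exact this
  rcases hle.eq_or_lt with h | h
  · exact h.symm
  · exact absurd ((hsh.coatom hq).2 _ h) hL.1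

end HNF

lemma rep_iff {W : Type*} [NormedAddCommGroup W] [InnerProductSpace ℝ W]
    {n k : ℕ} (Φ : Set W) (b : Fin n → W) (q : ℕ) (bv : Fin n → ℤ)
    (U : Matrix (Fin k) (Fin k) ℤ) (Ψ : Set (W × (Fin k → ℝ))) :
    ToroidalRep Φ b q bv U Ψ ↔ q.Prime ∧ (∀ i, 0 ≤ bv i ∧ bv i < (q : ℤ)) ∧
      ∃ l, Shape q l U ∧
      Ψ = SS Φ b (AddSubgroup.closure (Set.range fun i => U i)) (fun i => Pi.single l (bv i)) := by
  have hset : ∀ l : Fin k, {x : W × (Fin k → ℝ) | x.1 ∈ Φ ∧ ∃ c : Fin n → ℤ,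
      x.1 = ∑ i, (c i : ℝ) • b i ∧
      ∃ m ∈ AddSubgroup.closure (Set.range fun i => U i),
        x.2 = fun t => (((if t = l then ∑ i, c i * bv i else 0) + m t : ℤ) : ℝ)} =
      SS Φ b (AddSubgroup.closure (Set.range fun i => U i)) (fun i => Pi.single l (bv i)) := by
    intro l
    have e : ∀ (c : Fin n → ℤ) (m : Fin k → ℤ),
        (fun t => (((if t = l then ∑ i, c i * bv i else 0) + m t : ℤ) : ℝ)) =
        fun t => (((∑ i, c i • (Pi.single l (bv i) : Fin k → ℤ) + m) t : ℤ) : ℝ) := by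
      intro c m
      funext t
      congr 1
      by_cases ht : t = l
      · subst ht; simp [Finset.sum_apply]
      · simp [Finset.sum_apply, ht]
    simp only [SS, e]
  constructor
  · rintro ⟨hq, hb, hU, hdet, l, hl, hlu, hΨ⟩
    obtain ⟨l0, hs⟩ := hnf_shape hq hU hdet
    have : l = l0 := hs.row_unique hq l hl
    subst this
    rw [hset] at hΨ
    exact ⟨hq, fun i => ⟨(hb i).1, by have := (hb i).2; omega⟩, l, hs, hΨ⟩
  · rintro ⟨hq, hb, l, hs, hΨ⟩
    obtain ⟨hU, hdet⟩ := hs.hnf hq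
    refine ⟨hq, fun i => ⟨(hb i).1, by have := (hb i).2; omega⟩, hU, hdet, l, hs.row,
      hs.row_unique hq, ?_⟩
    rw [hset]; exact hΨ

/-- Section 8: classification of the maximal closed subroot systems with full
gradient of the untwisted toroidal affine reflection system
`Φ^re = {(α, r) : α ∈ Φ̊, r ∈ ℤᵏ}`, together with the uniqueness of the
representing triple `(q, (bᵢ), U)`. -/
theorem statement19 {V : Type*} [NormedAddCommGroup V] [InnerProductSpace ℝ V]
    [FiniteDimensional ℝ V]
    {n k : ℕ} (hn : 2 ≤ n) (hk : 1 ≤ k)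
    (Φ : Set V) (hΦ : IsRootSystem Φ) (hred : IsReduced Φ) (hirr : IsIrreducible Φ)
    (b : Fin n → V) (hbΦ : ∀ i, b i ∈ Φ) (hbli : LinearIndependent ℝ b)
    (hbsp : Submodule.span ℝ (Set.range b) = ⊤)
    (hbase : ∀ α ∈ Φ, ∃ c : Fin n → ℤ,
      α = ∑ i, (c i : ℝ) • b i ∧ ((∀ i, 0 ≤ c i) ∨ (∀ i, c i ≤ 0)))
    (Ψ : Set (V × (Fin k → ℝ))) :
    ((IsMaxClosedSubSys
        {x : V × (Fin k → ℝ) | x.1 ∈ Φ ∧ ∃ m : Fin k → ℤ, x.2 = fun t => (m t : ℝ)} Ψ ∧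
        Gr Ψ = Φ) ↔
      ∃ (q : ℕ) (bv : Fin n → ℤ) (U : Matrix (Fin k) (Fin k) ℤ),
        ToroidalRep Φ b q bv U Ψ) ∧
    ∀ (q q' : ℕ) (bv bv' : Fin n → ℤ) (U U' : Matrix (Fin k) (Fin k) ℤ),
      ToroidalRep Φ b q bv U Ψ → ToroidalRep Φ b q' bv' U' Ψ →
        q = q' ∧ bv = bv' ∧ U = U' := by
  constructor
  · refine (max_iff hΦ hred hirr hn b hbΦ hbli hbase Ψ).trans ⟨?_, ?_⟩
    · rintro ⟨L, z, hL, rfl⟩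
      obtain ⟨q, l, U, hq, hs, hLU, hredq⟩ := coatom_shape hL
      choose a ha0 haq haL using fun i => hredq (z i)
      refine ⟨q, a, U, (rep_iff Φ b q a U _).2 ⟨hq, fun i => ⟨ha0 i, haq i⟩, l, hs, ?_⟩⟩
      rw [← hLU]
      exact Set.Subset.antisymm (SS_congr haL)
        (SS_congr fun i => by rw [← neg_sub]; exact neg_mem (haL i))
    · rintro ⟨q, bv, U, h⟩
      obtain ⟨hq, hb, l, hs, hΨ⟩ := (rep_iff Φ b q bv U Ψ).1 h
      exact ⟨_, _, hs.coatom hq, hΨ⟩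
  · intro q q' bv bv' U U' h h'
    obtain ⟨hq, hb, l, hs, hΨ⟩ := (rep_iff Φ b q bv U Ψ).1 h
    obtain ⟨hq', hb', l', hs', hΨ'⟩ := (rep_iff Φ b q' bv' U' Ψ).1 h'
    have hE := hΨ.symm.trans hΨ'
    obtain ⟨h1, h2⟩ := SS_le hn hbΦ hbli hE.le
    obtain ⟨h1', -⟩ := SS_le hn hbΦ hbli hE.ge
    obtain ⟨rfl, rfl, rfl⟩ := hs.unique hq hq' hs' (le_antisymm h1 h1')
    refine ⟨rfl, ?_, rfl⟩
    funext i
    have := h2 i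
    rw [hs.mem, map_sub, phi_single, phi_single] at this
    exact eq_of_dvd_sub (hb i).1 (hb i).2 (hb' i).1 (hb' i).2 this

end BdS
end
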